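/- Let P be a polytope of dimension n and let (f_F), (g_F) be Stanley's f- and g-polynomials of its faces. Then x^{n+1} · g_P(1/x) = Σ_{F face of P, including the empty face 𝟎 and P itself} g_F(x) · (x−1)^{n − dim F}. (Since deg g_P ≤ ⌊n/2⌋, the left-hand side, meaning Σ_l b_l x^{n+1−l} where g_P(x) = Σ_l b_l x^l, is a polynomial, and the identity is an identity of polynomials.) -/

import Mathlib

/-!
The identity only uses that the face lattice of a polytope, with the empty face added, is Eulerian.

**Euler characteristic.** Consider compact convex sets, with Euler characteristic `1` if nonempty,
and bounded relatively open convex sets of dimension `d`, with Euler characteristic `(-1) ^ d` if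
nonempty (`IsEuler`). Slicing repeatedly by the levels of functionals shows that a
linear relation between indicator functions of such sets persists for the Euler
characteristics (`IsEuler.sum_eq_zero_aux`). Hence the numbers `(-1) ^ dim` of the pieces of
a partition of a nonempty compact convex set into bounded relatively open convex sets add up to `1`
(`sum_neg_one_pow_finrank_eq_one`).

**Eulerian face lattice.** Every point of a polytope lies in the relative interior of exactly one
face (`exists_face_mem_algRelint`, which rests on Farkas' lemma). This partition gives Euler's
relation for the faces of a face (`euler_lower`). For the faces of `G` strictly above `F`,
project along the span of `F`, so that `F` becomes a point, and cut by a hyperplane close to that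
point: the section is compact convex and is partitioned by the sections of the relative interiors
of the faces above `F` (`euler_interval`).

**The recursion.** By induction on the dimension, the Eulerian relations make `f_F` palindromic of
degree `k = dim F`, and then `g_F` is the truncation of `(1 - x) f_F` at degree `k / 2`, so that
`x ^ (k + 1) g_F(1 / x) = g_F + (x - 1) f_F` (`reflect_gTrunc`, `reflect_g_of_eulerian`). Expanding
`f_P` by its definition gives the claim.
-/

open scoped Pointwise Classical
open MeasureTheory Polynomial

noncomputable section

/-- The real vector corresponding to an integer vector in `ℤ^n ⊂ ℝ^n`. -/
def intVec {n : ℕ} (m : Fin n → ℤ) : Fin n → ℝ := fun i => (m i : ℝ)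

/-- `F` is a face of the polytope `P`: either `P` itself or a nonempty set of maximizers
over `P` of a linear functional. -/
def IsFaceOf {n : ℕ} (P F : Set (Fin n → ℝ)) : Prop :=
  F = P ∨ (F.Nonempty ∧ ∃ u : (Fin n → ℝ) →ₗ[ℝ] ℝ,
    F = {x | x ∈ P ∧ ∀ p ∈ P, u p ≤ u x})

/-- The dimension of (the affine span of) a face. -/
noncomputable def faceDim {n : ℕ} (F : Set (Fin n → ℝ)) : ℕ :=
  Module.finrank ℝ (affineSpan ℝ F).direction

/-- A polytope `P ⊂ ℝ^n` is simple if every vertex (`0`-dimensional face) lies on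
exactly `n` edges (`1`-dimensional faces). -/
def IsSimple {n : ℕ} (P : Set (Fin n → ℝ)) : Prop :=
  ∀ v, IsFaceOf P v → faceDim v = 0 →
    {E | IsFaceOf P E ∧ faceDim E = 1 ∧ v ⊆ E}.ncard = n

/-! ### Relatively open convex sets -/

/-- Algebraic relative openness: every segment of `C` can be prolonged inside `C` beyond each of its
endpoints.  For convex sets in finite dimension this agrees with being open in the affine span. -/
def RelOpen {m : ℕ} (C : Set (Fin m → ℝ)) : Prop :=
  ∀ x ∈ C, ∀ y ∈ C, ∃ ε : ℝ, 0 < ε ∧ x + ε • (x - y) ∈ C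

/-- From a point of a relatively open convex set one can move a little in any direction of its
linear span. -/
lemma RelOpen.exists_add_smul_mem {m : ℕ} {C : Set (Fin m → ℝ)} (hC : Convex ℝ C) (ho : RelOpen C)
    {x : Fin m → ℝ} (hx : x ∈ C) {v : Fin m → ℝ} (hv : v ∈ vectorSpan ℝ C) :
    ∃ ε : ℝ, 0 < ε ∧ x + ε • v ∈ C := by
  have shrink : ∀ (w : Fin m → ℝ) (ε δ : ℝ), 0 < δ → δ ≤ ε → x + ε • w ∈ C → x + δ • w ∈ C := by
    intro w ε δ hδ hle h
    have hε : 0 < ε := lt_of_lt_of_le hδ hle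
    have h2 : (1 - δ / ε) • x + (δ / ε) • (x + ε • w) ∈ C :=
      hC hx h (by rw [sub_nonneg, div_le_one hε]; exact hle) (by positivity) (by ring)
    convert h2 using 1
    ext i
    simp
    field_simp
    ring
  rw [vectorSpan_eq_span_vsub_set_right ℝ hx] at hv
  -- The symmetric statement is stable under linear combinations.
  have key : (∃ ε : ℝ, 0 < ε ∧ x + ε • v ∈ C) ∧ (∃ ε : ℝ, 0 < ε ∧ x + ε • (-v) ∈ C) := by
    induction hv using Submodule.span_induction with
    | mem w hw =>
      obtain ⟨y, hy, rfl⟩ := hw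
      refine ⟨⟨1, one_pos, by simpa using hy⟩, ?_⟩
      obtain ⟨ε, h, h'⟩ := ho x hx y hy
      exact ⟨ε, h, by simpa using h'⟩
    | zero => exact ⟨⟨1, one_pos, by simpa using hx⟩, ⟨1, one_pos, by simpa using hx⟩⟩
    | add w w' _ _ h h' =>
      have aux : ∀ a b : Fin m → ℝ, (∃ ε : ℝ, 0 < ε ∧ x + ε • a ∈ C) →
          (∃ ε : ℝ, 0 < ε ∧ x + ε • b ∈ C) → ∃ ε : ℝ, 0 < ε ∧ x + ε • (a + b) ∈ C := by
        rintro a b ⟨ε, h, ha⟩ ⟨ε', h', hb⟩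
        refine ⟨min ε ε' / 2, by positivity, ?_⟩
        have h1 := shrink a ε (min ε ε') (lt_min h h') (min_le_left _ _) ha
        have h2 := shrink b ε' (min ε ε') (lt_min h h') (min_le_right _ _) hb
        have h3 := hC h1 h2 (a := 1 / 2) (b := 1 / 2) (by norm_num) (by norm_num) (by norm_num)
        convert h3 using 1
        ext i
        simp
        ring
      refine ⟨aux _ _ h.1 h'.1, ?_⟩
      rw [neg_add]
      exact aux _ _ h.2 h'.2
    | smul a w _ h =>
      have aux : ∀ (a : ℝ) (w : Fin m → ℝ), 0 < a → (∃ ε : ℝ, 0 < ε ∧ x + ε • w ∈ C) →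
          ∃ ε : ℝ, 0 < ε ∧ x + ε • (a • w) ∈ C := by
        rintro a w ha ⟨ε, h, h'⟩
        refine ⟨ε / a, by positivity, ?_⟩
        rwa [smul_smul, div_mul_cancel₀ _ ha.ne']
      rcases lt_trichotomy a 0 with ha | rfl | ha
      · have h1 := aux (-a) _ (by linarith) h.1
        have h2 := aux (-a) _ (by linarith) h.2
        refine ⟨by simpa using h2, by simpa using h1⟩
      · exact ⟨⟨1, one_pos, by simpa using hx⟩, ⟨1, one_pos, by simpa using hx⟩⟩
      · have h1 := aux a _ ha h.1
        have h2 := aux a _ ha h.2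
        refine ⟨h1, by simpa using h2⟩
  exact key.1

lemma RelOpen.inter_level {m : ℕ} {C : Set (Fin m → ℝ)} (ho : RelOpen C)
    (u : (Fin m → ℝ) →ₗ[ℝ] ℝ) (t : ℝ) : RelOpen (C ∩ {x | u x = t}) := by
  rintro x ⟨hx, hxt⟩ y ⟨hy, hyt⟩
  obtain ⟨ε, h, h'⟩ := ho x hx y hy
  refine ⟨ε, h, h', ?_⟩
  simp only [Set.mem_ofPred_eq] at *
  simp [hxt, hyt]

lemma RelOpen.image {m : ℕ} {C : Set (Fin m → ℝ)} (ho : RelOpen C)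
    (π : (Fin m → ℝ) →ₗ[ℝ] (Fin m → ℝ)) : RelOpen (π '' C) := by
  rintro _ ⟨x, hx, rfl⟩ _ ⟨y, hy, rfl⟩
  obtain ⟨ε, h, h'⟩ := ho x hx y hy
  exact ⟨ε, h, _, h', by simp⟩

lemma convex_level {m : ℕ} (u : (Fin m → ℝ) →ₗ[ℝ] ℝ) (t : ℝ) : Convex ℝ {x | u x = t} :=
  convex_hyperplane u.isLinear t

/-- A nonempty hyperplane section of a relatively open convex set spans the whole hyperplane section
of the span. -/
lemma RelOpen.vectorSpan_inter_level {m : ℕ} {C : Set (Fin m → ℝ)} (hC : Convex ℝ C)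
    (ho : RelOpen C) (u : (Fin m → ℝ) →ₗ[ℝ] ℝ) {t : ℝ} {x : Fin m → ℝ} (hx : x ∈ C)
    (hxt : u x = t) :
    vectorSpan ℝ (C ∩ {x | u x = t}) = vectorSpan ℝ C ⊓ LinearMap.ker u := by
  apply le_antisymm
  · rw [vectorSpan_def, Submodule.span_le]
    rintro _ ⟨a, ⟨ha, hat⟩, b, ⟨hb, hbt⟩, rfl⟩
    refine ⟨vsub_mem_vectorSpan ℝ ha hb, ?_⟩
    simp only [Set.mem_ofPred_eq] at hat hbt
    simp [hat, hbt]
  · rintro v ⟨hv, hvu⟩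
    have hvu' : u v = 0 := hvu
    obtain ⟨ε, h, h'⟩ := ho.exists_add_smul_mem hC hx hv
    have h1 : (x + ε • v) -ᵥ x ∈ vectorSpan ℝ (C ∩ {x | u x = t}) :=
      vsub_mem_vectorSpan ℝ ⟨h', by simp [hvu', hxt]⟩ ⟨hx, hxt⟩
    have h2 := Submodule.smul_mem _ ε⁻¹ h1
    simpa [smul_smul, h.ne'] using h2

lemma finrank_map_add_finrank_inf_ker {m : ℕ} {M : Type*} [AddCommGroup M] [Module ℝ M]
    (W : Submodule ℝ (Fin m → ℝ)) (u : (Fin m → ℝ) →ₗ[ℝ] M) :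
    Module.finrank ℝ (W.map u) + Module.finrank ℝ ↥(W ⊓ LinearMap.ker u) = Module.finrank ℝ W := by
  have h := LinearMap.finrank_range_add_finrank_ker (u.domRestrict W)
  have hk : Module.finrank ℝ ↥(W ⊓ LinearMap.ker u)
      = Module.finrank ℝ (LinearMap.ker (u.domRestrict W)) := by
    rw [LinearMap.ker_domRestrict, ← (Submodule.comapSubtypeEquivOfLe
      (p := W ⊓ LinearMap.ker u) (q := W) inf_le_left).finrank_eq, Submodule.comap_inf,
      Submodule.comap_subtype_self, top_inf_eq]
  rw [LinearMap.range_domRestrict] at h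
  omega

lemma finrank_inf_ker_add_one {m : ℕ} (W : Submodule ℝ (Fin m → ℝ))
    (u : (Fin m → ℝ) →ₗ[ℝ] ℝ) {w : Fin m → ℝ} (hw : w ∈ W) (hu : u w ≠ 0) :
    Module.finrank ℝ ↥(W ⊓ LinearMap.ker u) + 1 = Module.finrank ℝ W := by
  have h := finrank_map_add_finrank_inf_ker W u
  have hr : W.map u = ⊤ := by
    rw [← LinearMap.range_domRestrict]
    apply LinearMap.range_eq_top.2
    apply LinearMap.surjective
    intro h0
    exact hu (by simpa using LinearMap.congr_fun h0 ⟨w, hw⟩)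
  rw [hr, finrank_top, Module.finrank_self] at h
  omega

/-- If `u` is not constant on `C`, each nonempty section has dimension one less. -/
lemma RelOpen.finrank_inter_level {m : ℕ} {C : Set (Fin m → ℝ)} (hC : Convex ℝ C)
    (ho : RelOpen C) (u : (Fin m → ℝ) →ₗ[ℝ] ℝ) {t : ℝ} {x : Fin m → ℝ} (hx : x ∈ C)
    (hxt : u x = t) {a b : Fin m → ℝ} (ha : a ∈ C) (hb : b ∈ C) (hab : u a ≠ u b) :
    Module.finrank ℝ (vectorSpan ℝ (C ∩ {x | u x = t})) + 1
      = Module.finrank ℝ (vectorSpan ℝ C) := by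
  rw [ho.vectorSpan_inter_level hC u hx hxt]
  apply finrank_inf_ker_add_one _ u (vsub_mem_vectorSpan ℝ ha hb)
  simpa [sub_eq_zero] using hab

/-! ### The Euler characteristic of convex sets -/

/-- `IsEuler C c`: the set `C` belongs to the class of convex sets considered here, and `c` is its
Euler characteristic with compact support: `0` for the empty set, `1` for a nonempty compact convex
set, `(-1) ^ dim C` for a nonempty bounded relatively open convex set. -/
def IsEuler {m : ℕ} (C : Set (Fin m → ℝ)) (c : ℤ) : Prop :=
  (C = ∅ ∧ c = 0) ∨ (C.Nonempty ∧ Convex ℝ C ∧ IsCompact C ∧ c = 1) ∨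
    (C.Nonempty ∧ Convex ℝ C ∧ Bornology.IsBounded C ∧ RelOpen C ∧
      c = (-1) ^ Module.finrank ℝ (vectorSpan ℝ C))

/-- On the line: if `h i` jumps to the right of `b i` only, by `e i`, then a linear relation between
the functions `h i` gives the same linear relation between the jumps. -/
lemma sum_jump_eq_zero {ι : Type*} (I : Finset ι) (a : ι → ℤ) (h : ι → ℝ → ℤ) (b : ι → ℝ)
    (e : ι → ℤ)
    (hj : ∀ i ∈ I, ∀ t, ∀ᶠ s in nhdsWithin t (Set.Ioi t),
      h i t - h i s = if t = b i then e i else 0)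
    (h0 : ∀ t, ∑ i ∈ I, a i * h i t = 0) : ∑ i ∈ I, a i * e i = 0 := by
  have key : ∀ t, ∑ i ∈ I, a i * (if t = b i then e i else 0) = 0 := by
    intro t
    have hev : ∀ᶠ s in nhdsWithin t (Set.Ioi t), ∀ i ∈ I,
        h i t - h i s = if t = b i then e i else 0 :=
      (Filter.eventually_all_finset I).2 fun i hi => hj i hi t
    obtain ⟨s, hs⟩ := hev.exists
    rw [← Finset.sum_congr rfl fun i hi => congrArg (a i * ·) (hs i hi)]
    simp only [mul_sub, Finset.sum_sub_distrib, h0, sub_self]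
  have h1 : ∑ t ∈ I.image b, ∑ i ∈ I, a i * (if t = b i then e i else 0) = 0 :=
    Finset.sum_eq_zero fun t _ => key t
  rw [Finset.sum_comm] at h1
  rw [← h1]
  refine Finset.sum_congr rfl fun i hi => ?_
  rw [← Finset.mul_sum, Finset.sum_ite_eq_of_mem' _ _ _ (Finset.mem_image_of_mem b hi)]

/-- The Euler characteristics of the sections of `C` by the levels of `u` jump exactly once, and the
jump is the Euler characteristic of `C`. -/
lemma IsEuler.slice {m : ℕ} {C : Set (Fin m → ℝ)} {c : ℤ} (hC : IsEuler C c)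
    (u : (Fin m → ℝ) →ₗ[ℝ] ℝ) :
    ∃ (h : ℝ → ℤ) (b : ℝ), (∀ t, IsEuler (C ∩ {x | u x = t}) (h t)) ∧
      ∀ t, ∀ᶠ s in nhdsWithin t (Set.Ioi t), h t - h s = if t = b then c else 0 := by
  have hcont : Continuous u := u.continuous_of_finiteDimensional
  rcases hC with ⟨rfl, rfl⟩ | ⟨hne, hconv, hcomp, rfl⟩ | ⟨hne, hconv, hbdd, ho, hc⟩
  · exact ⟨fun _ => 0, 0, fun t => Or.inl ⟨by simp, rfl⟩, fun t => by simp⟩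
  · -- The image of a compact convex set is a compact interval, with a jump at its right end.
    obtain ⟨xa, hxa, ha⟩ := hcomp.exists_isMinOn hne hcont.continuousOn
    obtain ⟨xb, hxb, hb⟩ := hcomp.exists_isMaxOn hne hcont.continuousOn
    have hab : u xa ≤ u xb := ha hxb
    have himg : ∀ t, u xa ≤ t → t ≤ u xb → ∃ x ∈ C, u x = t := by
      intro t h1 h2
      have := (hconv.isPreconnected.image u hcont.continuousOn).Icc_subset
        (Set.mem_image_of_mem u hxa) (Set.mem_image_of_mem u hxb) ⟨h1, h2⟩
      exact this
    refine ⟨fun t => if u xa ≤ t ∧ t ≤ u xb then 1 else 0, u xb, fun t => ?_, fun t => ?_⟩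
    · by_cases ht : u xa ≤ t ∧ t ≤ u xb
      · simp only [ht, and_self, if_true]
        obtain ⟨x, hx, hxt⟩ := himg t ht.1 ht.2
        refine Or.inr (Or.inl ⟨⟨x, hx, hxt⟩, hconv.inter (convex_level u t), ?_, rfl⟩)
        exact hcomp.inter_right (isClosed_singleton.preimage hcont)
      · simp only [ht, if_false]
        refine Or.inl ⟨?_, rfl⟩
        ext x
        simp only [Set.mem_inter_iff, Set.mem_ofPred_eq, Set.mem_empty_iff_false, iff_false]
        rintro ⟨hx, rfl⟩
        exact ht ⟨ha hx, hb hx⟩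
    · rcases lt_or_ge t (u xa) with h1 | h1
      · filter_upwards [Ioo_mem_nhdsGT h1] with s hs
        rw [if_neg (by intro h; linarith [h.1]), if_neg (by intro h; linarith [h.1, hs.2]),
          if_neg (by linarith)]
        rfl
      · rcases lt_trichotomy t (u xb) with h2 | h2 | h2
        · filter_upwards [Ioo_mem_nhdsGT h2] with s hs
          rw [if_pos ⟨h1, h2.le⟩, if_pos ⟨by linarith [hs.1], hs.2.le⟩, if_neg h2.ne]
          rfl
        · filter_upwards [self_mem_nhdsWithin] with s hs
          have hs' : t < s := hs
          rw [if_pos ⟨h1, h2.le⟩, if_neg (by intro h; linarith [h.2]), if_pos h2]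
          rfl
        · filter_upwards [self_mem_nhdsWithin] with s hs
          have hs' : t < s := hs
          rw [if_neg (by intro h; linarith [h.2]), if_neg (by intro h; linarith [h.2]),
            if_neg h2.ne']
          rfl
  · by_cases hconst : ∀ x ∈ C, ∀ y ∈ C, u x = u y
    · obtain ⟨x₀, hx₀⟩ := hne
      refine ⟨fun t => if t = u x₀ then c else 0, u x₀, fun t => ?_, fun t => ?_⟩
      · by_cases ht : t = u x₀
        · have : C ∩ {x | u x = t} = C := by
            apply Set.inter_eq_left.2
            intro x hx
            exact (hconst x hx x₀ hx₀).trans ht.symm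
          simp only [ht, if_true] at this ⊢
          rw [this]
          exact Or.inr (Or.inr ⟨⟨x₀, hx₀⟩, hconv, hbdd, ho, hc⟩)
        · simp only [ht, if_false]
          refine Or.inl ⟨?_, rfl⟩
          ext x
          simp only [Set.mem_inter_iff, Set.mem_ofPred_eq, Set.mem_empty_iff_false, iff_false]
          rintro ⟨hx, rfl⟩
          exact ht (hconst x hx x₀ hx₀)
      · rcases lt_or_ge t (u x₀) with h1 | h1
        · filter_upwards [Ioo_mem_nhdsGT h1] with s hs
          rw [if_neg h1.ne, if_neg hs.2.ne]
          rfl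
        · filter_upwards [self_mem_nhdsWithin] with s hs
          have hs' : t < s := hs
          rw [if_neg (show s ≠ u x₀ by linarith), sub_zero]
    · -- The image is a nonempty bounded open interval, with a jump at its left end.
      push Not at hconst
      obtain ⟨p, hp, q, hq, hpq⟩ := hconst
      have hne' : (u '' C).Nonempty := hne.image u
      have hbu : Bornology.IsBounded (u '' C) := by
        have := (LinearMap.toContinuousLinearMap u).lipschitz.isBounded_image hbdd
        simpa using this
      have hlow := hbu.bddBelow
      have hup := hbu.bddAbove
      -- Each point of `C` can be moved in a direction that increases, or decreases, `u`.
      have hmove : ∀ x ∈ C, (∃ y ∈ C, u y < u x) ∧ ∃ y ∈ C, u x < u y := by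
        have hdir : ∀ x ∈ C, ∀ p ∈ C, ∀ q ∈ C, u p < u q → ∃ y ∈ C, u x < u y := by
          intro x hx p hp q hq hlt
          obtain ⟨ε, h, h'⟩ := ho.exists_add_smul_mem hconv hx (vsub_mem_vectorSpan ℝ hq hp)
          refine ⟨_, h', ?_⟩
          have : 0 < ε * (u q - u p) := mul_pos h (by linarith)
          simpa using this
        have hdir' : ∀ x ∈ C, ∀ p ∈ C, ∀ q ∈ C, u p < u q → ∃ y ∈ C, u y < u x := by
          intro x hx p hp q hq hlt
          obtain ⟨ε, h, h'⟩ := ho.exists_add_smul_mem hconv hx (vsub_mem_vectorSpan ℝ hp hq)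
          refine ⟨_, h', ?_⟩
          have : 0 < ε * (u q - u p) := mul_pos h (by linarith)
          simp
          linarith
        intro x hx
        rcases lt_or_gt_of_ne hpq with h | h
        · exact ⟨hdir' x hx p hp q hq h, hdir x hx p hp q hq h⟩
        · exact ⟨hdir' x hx q hq p hp h, hdir x hx q hq p hp h⟩
      set α := sInf (u '' C)
      set β := sSup (u '' C)
      have hαβ : ∀ x ∈ C, α < u x ∧ u x < β := by
        intro x hx
        obtain ⟨⟨y, hy, hyx⟩, z, hz, hxz⟩ := hmove x hx
        exact ⟨lt_of_le_of_lt (csInf_le hlow ⟨y, hy, rfl⟩) hyx,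
          lt_of_lt_of_le hxz (le_csSup hup ⟨z, hz, rfl⟩)⟩
      have himg : ∀ t, α < t → t < β → ∃ x ∈ C, u x = t := by
        intro t h1 h2
        obtain ⟨_, ⟨x, hx, rfl⟩, hxt⟩ := exists_lt_of_csInf_lt hne' h1
        obtain ⟨_, ⟨y, hy, rfl⟩, hyt⟩ := exists_lt_of_lt_csSup hne' h2
        exact (hconv.isPreconnected.image u hcont.continuousOn).Icc_subset
          (Set.mem_image_of_mem u hx) (Set.mem_image_of_mem u hy) ⟨hxt.le, hyt.le⟩
      have hlt : α < β := by
        obtain ⟨x, hx⟩ := hne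
        exact (hαβ x hx).1.trans (hαβ x hx).2
      refine ⟨fun t => if α < t ∧ t < β then -c else 0, α, fun t => ?_, fun t => ?_⟩
      · by_cases ht : α < t ∧ t < β
        · simp only [ht, and_self, if_true]
          obtain ⟨x, hx, hxt⟩ := himg t ht.1 ht.2
          refine Or.inr (Or.inr ⟨⟨x, hx, hxt⟩, hconv.inter (convex_level u t),
            hbdd.subset Set.inter_subset_left, ho.inter_level u t, ?_⟩)
          rw [hc, ← ho.finrank_inter_level hconv u hx hxt hp hq hpq, pow_succ]
          ring
        · simp only [ht, if_false]
          refine Or.inl ⟨?_, rfl⟩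
          ext x
          simp only [Set.mem_inter_iff, Set.mem_ofPred_eq, Set.mem_empty_iff_false, iff_false]
          rintro ⟨hx, rfl⟩
          exact ht (hαβ x hx)
      · rcases lt_trichotomy t α with h1 | h1 | h1
        · filter_upwards [Ioo_mem_nhdsGT h1] with s hs
          rw [if_neg (by intro h; linarith [h.1]), if_neg (by intro h; linarith [h.1, hs.2]),
            if_neg h1.ne]
          rfl
        · filter_upwards [Ioo_mem_nhdsGT (show t < β by linarith)] with s hs
          rw [if_neg (by intro h; linarith [h.1]), if_pos ⟨by linarith [hs.1], hs.2⟩, if_pos h1]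
          ring
        · rcases lt_or_ge t β with h2 | h2
          · filter_upwards [Ioo_mem_nhdsGT h2] with s hs
            rw [if_pos ⟨h1, h2⟩, if_pos ⟨by linarith [hs.1], hs.2⟩, if_neg h1.ne']
            ring
          · filter_upwards [self_mem_nhdsWithin] with s hs
            have hs' : t < s := hs
            rw [if_neg (by intro h; linarith [h.2]), if_neg (by intro h; linarith [h.2]),
              if_neg h1.ne']
            rfl

lemma IsEuler.eq_of_subsingleton {m : ℕ} {C : Set (Fin m → ℝ)} {c : ℤ} (hC : IsEuler C c)
    (hs : C.Subsingleton) (x : Fin m → ℝ) (hx : C ⊆ {x}) : c = C.indicator 1 x := by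
  rcases hC with ⟨rfl, rfl⟩ | ⟨hne, -, -, rfl⟩ | ⟨hne, -, -, -, rfl⟩
  · simp
  · obtain ⟨y, hy⟩ := hne
    obtain rfl : y = x := hx hy
    simp [hy]
  · obtain ⟨y, hy⟩ := hne
    obtain rfl : y = x := hx hy
    rw [vectorSpan_of_subsingleton ℝ hs]
    simp [hy]

/-- A linear relation between indicator functions implies the same relation between Euler
characteristics.  The proof is by repeated slicing: the functionals in `L` separate the points of
the sets involved. -/
lemma IsEuler.sum_eq_zero_aux {m : ℕ} {ι : Type*} (I : Finset ι) (a : ι → ℤ)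
    (L : List ((Fin m → ℝ) →ₗ[ℝ] ℝ)) :
    ∀ (C : ι → Set (Fin m → ℝ)) (c : ι → ℤ), (∀ i ∈ I, IsEuler (C i) (c i)) →
      (∀ i ∈ I, ∀ x ∈ C i, ∀ j ∈ I, ∀ y ∈ C j, (∀ u ∈ L, u x = u y) → x = y) →
      (∀ x, ∑ i ∈ I, a i * (C i).indicator 1 x = 0) → ∑ i ∈ I, a i * c i = 0 := by
  induction L with
  | nil =>
    intro C c hC hsep h0
    have hsep' : ∀ i ∈ I, ∀ x ∈ C i, ∀ j ∈ I, ∀ y ∈ C j, x = y :=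
      fun i hi x hx j hj y hy => hsep i hi x hx j hj y hy (by simp)
    have hx : ∃ x, ∀ i ∈ I, C i ⊆ {x} := by
      by_cases hex : ∃ i ∈ I, (C i).Nonempty
      · obtain ⟨i, hi, x, hx⟩ := hex
        exact ⟨x, fun j hj y hy => hsep' j hj y hy i hi x hx⟩
      · push Not at hex
        exact ⟨0, fun i hi => by rw [hex i hi]; simp⟩
    obtain ⟨x, hx⟩ := hx
    rw [← h0 x]
    refine Finset.sum_congr rfl fun i hi => ?_
    rw [(hC i hi).eq_of_subsingleton (fun y hy z hz => hsep' i hi y hy i hi z hz) x (hx i hi)]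
  | cons u L ih =>
    intro C c hC hsep h0
    choose! h b hh hj using fun i hi => (hC i hi).slice u
    refine sum_jump_eq_zero I a h b c hj fun t => ?_
    refine ih (fun i => C i ∩ {x | u x = t}) (fun i => h i t) (fun i hi => hh i hi t) ?_ ?_
    · rintro i hi x ⟨hx, hxt⟩ j hj y ⟨hy, hyt⟩ hL
      refine hsep i hi x hx j hj y hy ?_
      rintro w (_ | ⟨_, hw⟩)
      · exact Eq.trans hxt hyt.symm
      · exact hL w hw
    · intro x
      by_cases hxt : u x = t
      · rw [← h0 x]
        refine Finset.sum_congr rfl fun i hi => ?_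
        simp [Set.indicator, hxt]
      · refine Finset.sum_eq_zero fun i hi => ?_
        simp [Set.indicator, hxt]

/-- If a compact convex set is the disjoint union of finitely many bounded relatively open convex
sets `C i`, then `∑ (-1) ^ dim (C i) = 1`. -/
lemma sum_neg_one_pow_finrank_eq_one {m : ℕ} {ι : Type*} (I : Finset ι)
    (K : Set (Fin m → ℝ)) (hne : K.Nonempty) (hK : Convex ℝ K) (hKc : IsCompact K)
    (C : ι → Set (Fin m → ℝ)) (hCne : ∀ i ∈ I, (C i).Nonempty) (hC : ∀ i ∈ I, Convex ℝ (C i))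
    (hCo : ∀ i ∈ I, RelOpen (C i)) (hsub : ∀ i ∈ I, C i ⊆ K)
    (hcover : ∀ x ∈ K, ∃ i ∈ I, x ∈ C i)
    (hdisj : ∀ x, ∀ i ∈ I, ∀ j ∈ I, x ∈ C i → x ∈ C j → i = j) :
    ∑ i ∈ I, (-1 : ℤ) ^ Module.finrank ℝ (vectorSpan ℝ (C i)) = 1 := by
  -- Index `none` stands for `K`, with coefficient `-1`.
  have key := IsEuler.sum_eq_zero_aux (insert none (I.image some))
    (fun o : Option ι => o.elim (-1) fun _ => 1)
    (List.ofFn fun j : Fin m => LinearMap.proj (R := ℝ) (φ := fun _ : Fin m => ℝ) j)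
    (fun o => o.elim K C)
    (fun o => o.elim 1 fun i => (-1) ^ Module.finrank ℝ (vectorSpan ℝ (C i))) ?_ ?_ ?_
  · rw [Finset.sum_insert (by simp), Finset.sum_image (by simp)] at key
    simp only [Option.elim] at key
    simp only [one_mul] at key
    linarith
  · intro o ho
    rcases o with _ | i
    · exact Or.inr (Or.inl ⟨hne, hK, hKc, rfl⟩)
    · have hi : i ∈ I := by simpa using ho
      exact Or.inr (Or.inr ⟨hCne i hi, hC i hi, hKc.isBounded.subset (hsub i hi), hCo i hi, rfl⟩)
  · intro _ _ x _ _ _ y _ hL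
    ext j
    exact hL (LinearMap.proj j) (by simp [List.mem_ofFn])
  · intro x
    rw [Finset.sum_insert (by simp), Finset.sum_image (by simp)]
    simp only [Option.elim, one_mul]
    by_cases hx : x ∈ K
    · obtain ⟨i, hi, hxi⟩ := hcover x hx
      rw [Finset.sum_eq_single_of_mem i hi]
      · simp [hx, hxi]
      · intro j hj hji
        rw [Set.indicator_of_notMem fun hxj => hji (hdisj x j hj i hi hxj hxi)]
    · rw [Finset.sum_eq_zero]
      · simp [hx]
      · intro i hi
        rw [Set.indicator_of_notMem fun hxi => hx (hsub i hi hxi)]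

/-! ### Faces of a polytope -/

/-- **Farkas' lemma**: `b` is a nonnegative combination of the `a i`, or some functional is
nonpositive on the `a i` and positive on `b`.  In the induction step, a functional that works for
all `a i` but the last vector `v` is used to project everything along `v`. -/
lemma farkas {m : ℕ} {ι : Type*} (s : Finset ι) : ∀ (a : ι → (Fin m → ℝ)) (b : Fin m → ℝ),
    (∃ c : ι → ℝ, (∀ i ∈ s, 0 ≤ c i) ∧ b = ∑ i ∈ s, c i • a i) ∨
      ∃ u : (Fin m → ℝ) →ₗ[ℝ] ℝ, (∀ i ∈ s, u (a i) ≤ 0) ∧ 0 < u b := by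
  induction s using Finset.induction with
  | empty =>
    intro a b
    by_cases hb : b = 0
    · exact Or.inl ⟨0, by simp, by simp [hb]⟩
    · obtain ⟨j, hj⟩ : ∃ j, b j ≠ 0 := by
        by_contra h
        push Not at h
        exact hb (funext h)
      refine Or.inr ⟨b j • LinearMap.proj j, by simp, ?_⟩
      simpa using mul_self_pos.2 hj
  | insert k s hk ih =>
    intro a b
    rcases ih a b with ⟨c, hc, hb⟩ | ⟨u, hu, hub⟩
    · refine Or.inl ⟨fun i => if i = k then 0 else c i, ?_, ?_⟩
      · intro i hi
        by_cases h : i = k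
        · simp [h]
        · simpa [h] using hc i (Finset.mem_of_mem_insert_of_ne hi h)
      · rw [Finset.sum_insert hk, hb]
        simp only [if_true, zero_smul, zero_add]
        refine Finset.sum_congr rfl fun i hi => ?_
        rw [if_neg (ne_of_mem_of_not_mem hi hk)]
    · by_cases huk : u (a k) ≤ 0
      · refine Or.inr ⟨u, ?_, hub⟩
        intro i hi
        rcases Finset.mem_insert.1 hi with rfl | hi
        · exact huk
        · exact hu i hi
      · push Not at huk
        -- `T` is the projection along `a k` onto the kernel of `u`.
        set T : (Fin m → ℝ) →ₗ[ℝ] (Fin m → ℝ) :=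
          LinearMap.id - ((u (a k))⁻¹ • u).smulRight (a k) with hT
        have hTx : ∀ x, T x = x - ((u (a k))⁻¹ * u x) • a k := fun x => by simp [hT]
        rcases ih (fun i => T (a i)) (T b) with ⟨c, hc, hb⟩ | ⟨w, hw, hwb⟩
        · left
          set r : ℝ := (u (a k))⁻¹ * (u b - ∑ i ∈ s, c i * u (a i)) with hr
          have hr0 : 0 ≤ r := by
            have : ∑ i ∈ s, c i * u (a i) ≤ 0 :=
              Finset.sum_nonpos fun i hi => mul_nonpos_of_nonneg_of_nonpos (hc i hi) (hu i hi)
            apply mul_nonneg (by positivity)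
            linarith
          refine ⟨fun i => if i = k then r else c i, ?_, ?_⟩
          · intro i hi
            by_cases h : i = k
            · simpa [h] using hr0
            · simpa [h] using hc i (Finset.mem_of_mem_insert_of_ne hi h)
          · rw [Finset.sum_insert hk]
            have h1 : ∑ i ∈ s, (if i = k then r else c i) • a i = ∑ i ∈ s, c i • a i :=
              Finset.sum_congr rfl fun i hi => by rw [if_neg (ne_of_mem_of_not_mem hi hk)]
            rw [h1]
            simp only [if_true]
            have h2 : b = T b + ((u (a k))⁻¹ * u b) • a k := by rw [hTx]; abel
            have h3 : ∑ i ∈ s, c i • T (a i)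
                = ∑ i ∈ s, c i • a i - ((u (a k))⁻¹ * ∑ i ∈ s, c i * u (a i)) • a k := by
              simp only [hTx, smul_sub, Finset.sum_sub_distrib, smul_smul, Finset.mul_sum,
                Finset.sum_smul]
              congr 1
              refine Finset.sum_congr rfl fun i _ => ?_
              congr 1
              ring
            rw [h2, hb, h3, hr, mul_sub, sub_smul]
            abel
        · refine Or.inr ⟨w ∘ₗ T, ?_, hwb⟩
          intro i hi
          rcases Finset.mem_insert.1 hi with rfl | hi
          · simp [hTx, inv_mul_cancel₀ huk.ne']
          · exact hw i hi

/-- In a polytope, either the segment from `y` to `x` can be prolonged beyond `x`, or some face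
contains `x` but not `y`. -/
lemma exists_prolong_or_separate {m : ℕ} (S : Finset (Fin m → ℝ)) {x : Fin m → ℝ}
    (hx : x ∈ convexHull ℝ (S : Set (Fin m → ℝ))) (y : Fin m → ℝ) :
    (∃ ε : ℝ, 0 < ε ∧ x + ε • (x - y) ∈ convexHull ℝ (S : Set (Fin m → ℝ))) ∨
      ∃ u : (Fin m → ℝ) →ₗ[ℝ] ℝ,
        (∀ p ∈ convexHull ℝ (S : Set (Fin m → ℝ)), u p ≤ u x) ∧ u y < u x := by
  have hconv := convex_convexHull ℝ (S : Set (Fin m → ℝ))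
  rcases farkas S (fun s => s - x) (x - y) with ⟨c, hc, hb⟩ | ⟨u, hu, hub⟩
  · left
    have hN : 0 ≤ ∑ s ∈ S, c s := Finset.sum_nonneg hc
    set N := ∑ s ∈ S, c s with hNdef
    have h1 : x + (1 + N)⁻¹ • (x - y) = (1 + N)⁻¹ • (x + ∑ s ∈ S, c s • s) := by
      rw [hb]
      simp only [smul_sub, Finset.sum_sub_distrib, ← Finset.sum_smul, ← hNdef, smul_add]
      have : x = (1 + N)⁻¹ • x + ((1 + N)⁻¹ * N) • x := by
        rw [← add_smul]
        have : (1 + N)⁻¹ + (1 + N)⁻¹ * N = 1 := by field_simp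
        rw [this, one_smul]
      nth_rewrite 1 [this]
      rw [mul_smul]
      abel
    refine ⟨(1 + N)⁻¹, by positivity, ?_⟩
    rw [h1]
    rcases hN.eq_or_lt with h0 | h0
    · have hc0 : ∀ s ∈ S, c s = 0 := (Finset.sum_eq_zero_iff_of_nonneg hc).1 h0.symm
      rw [Finset.sum_eq_zero fun s hs => by rw [hc0 s hs, zero_smul], ← h0]
      simpa using hx
    · have h2 : N⁻¹ • ∑ s ∈ S, c s • s ∈ convexHull ℝ (S : Set (Fin m → ℝ)) := by
        have := hconv.sum_mem (t := S) (w := fun s => N⁻¹ * c s) (z := id)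
          (fun s hs => mul_nonneg (by positivity) (hc s hs))
          (by rw [← Finset.mul_sum, ← hNdef, inv_mul_cancel₀ h0.ne'])
          (fun s hs => subset_convexHull ℝ _ hs)
        simpa [Finset.smul_sum, smul_smul] using this
      have h3 := hconv hx h2 (a := (1 + N)⁻¹) (b := (1 + N)⁻¹ * N) (by positivity) (by positivity)
        (by field_simp)
      rw [smul_smul, mul_assoc, mul_inv_cancel₀ h0.ne', mul_one, ← smul_add] at h3
      exact h3
  · right
    refine ⟨u, fun p hp => ?_, by simpa using hub⟩
    have hhalf : convexHull ℝ (S : Set (Fin m → ℝ)) ⊆ {p | u p ≤ u x} :=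
      convexHull_min (fun s hs => by simpa using hu s hs) (convex_halfSpace_le u.isLinear _)
    exact hhalf hp

/-- For a nonempty `P`, faces are the nonempty intersections of `P` with supporting hyperplanes
(the face `P` itself being given by the zero functional). -/
lemma isFaceOf_iff {m : ℕ} {P F : Set (Fin m → ℝ)} (hP : P.Nonempty) :
    IsFaceOf P F ↔ F.Nonempty ∧ ∃ (u : (Fin m → ℝ) →ₗ[ℝ] ℝ) (M : ℝ),
      (∀ p ∈ P, u p ≤ M) ∧ F = {x | x ∈ P ∧ u x = M} := by
  constructor
  · rintro (rfl | ⟨hne, u, rfl⟩)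
    · exact ⟨hP, 0, 0, by simp, by simp⟩
    · refine ⟨hne, ?_⟩
      obtain ⟨x₀, hx₀, hmax⟩ := hne
      refine ⟨u, u x₀, hmax, ?_⟩
      ext x
      exact ⟨fun h => ⟨h.1, le_antisymm (hmax x h.1) (h.2 x₀ hx₀)⟩,
        fun h => ⟨h.1, fun p hp => (hmax p hp).trans h.2.ge⟩⟩
  · rintro ⟨hne, u, M, hM, rfl⟩
    refine Or.inr ⟨hne, u, ?_⟩
    obtain ⟨x₀, hx₀, hx₀M⟩ := hne
    ext x
    exact ⟨fun h => ⟨h.1, fun p hp => (hM p hp).trans h.2.ge⟩,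
      fun h => ⟨h.1, le_antisymm (hM x h.1) (hx₀M.ge.trans (h.2 x₀ hx₀))⟩⟩

lemma faceDim_eq {m : ℕ} (F : Set (Fin m → ℝ)) :
    faceDim F = Module.finrank ℝ (vectorSpan ℝ F) := by
  rw [faceDim, direction_affineSpan]

lemma IsFaceOf.subset {m : ℕ} {P F : Set (Fin m → ℝ)} (hF : IsFaceOf P F) : F ⊆ P := by
  rcases hF with rfl | ⟨-, u, rfl⟩
  · exact subset_rfl
  · exact fun x hx => hx.1

lemma IsFaceOf.nonempty {m : ℕ} {P F : Set (Fin m → ℝ)} (hP : P.Nonempty) (hF : IsFaceOf P F) :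
    F.Nonempty := ((isFaceOf_iff hP).1 hF).1

lemma IsFaceOf.convex {m : ℕ} {P F : Set (Fin m → ℝ)} (hP : P.Nonempty) (hc : Convex ℝ P)
    (hF : IsFaceOf P F) : Convex ℝ F := by
  obtain ⟨-, u, M, -, rfl⟩ := (isFaceOf_iff hP).1 hF
  exact hc.inter (convex_level u M)

lemma IsFaceOf.isCompact {m : ℕ} {P F : Set (Fin m → ℝ)} (hP : P.Nonempty) (hc : IsCompact P)
    (hF : IsFaceOf P F) : IsCompact F := by
  obtain ⟨-, u, M, -, rfl⟩ := (isFaceOf_iff hP).1 hF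
  exact hc.inter_right (isClosed_singleton.preimage u.continuous_of_finiteDimensional)

/-- Faces are extreme: if `a x + b y` with `a > 0` lies in a face, so does `x`. -/
lemma IsFaceOf.mem_of_combo {m : ℕ} {P F : Set (Fin m → ℝ)} (hP : P.Nonempty)
    (hF : IsFaceOf P F) {x y : Fin m → ℝ} (hx : x ∈ P) (hy : y ∈ P) {a b : ℝ} (ha : 0 < a)
    (hb : 0 ≤ b) (hab : a + b = 1) (h : a • x + b • y ∈ F) : x ∈ F := by
  obtain ⟨-, u, M, hM, rfl⟩ := (isFaceOf_iff hP).1 hF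
  refine ⟨hx, le_antisymm (hM x hx) ?_⟩
  have h1 : a * u x + b * u y = M := by simpa using h.2
  have h2 : b * u y ≤ b * M := mul_le_mul_of_nonneg_left (hM y hy) hb
  have h3 : a * M ≤ a * u x := by
    have : a * M + b * M = M := by rw [← add_mul, hab, one_mul]
    linarith
  exact le_of_mul_le_mul_left h3 ha

lemma IsFaceOf.mem_of_prolong {m : ℕ} {P F : Set (Fin m → ℝ)} (hP : P.Nonempty)
    (hF : IsFaceOf P F) {x y : Fin m → ℝ} (hx : x ∈ F) (hy : y ∈ P) {ε : ℝ} (hε : 0 < ε)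
    (h : x + ε • (x - y) ∈ P) : y ∈ F := by
  refine hF.mem_of_combo hP hy h (a := ε / (1 + ε)) (b := 1 / (1 + ε)) (by positivity)
    (by positivity) (by field_simp; ring) ?_
  convert hx using 1
  ext i
  simp
  field_simp
  ring

lemma IsFaceOf.inter {m : ℕ} {P F G : Set (Fin m → ℝ)} (hP : P.Nonempty) (hF : IsFaceOf P F)
    (hG : IsFaceOf P G) (hne : (F ∩ G).Nonempty) : IsFaceOf P (F ∩ G) := by
  obtain ⟨-, u, M, hM, rfl⟩ := (isFaceOf_iff hP).1 hF
  obtain ⟨-, w, N, hN, rfl⟩ := (isFaceOf_iff hP).1 hG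
  refine (isFaceOf_iff hP).2 ⟨hne, u + w, M + N, fun p hp => add_le_add (hM p hp) (hN p hp), ?_⟩
  ext x
  constructor
  · rintro ⟨⟨hx, h1⟩, -, h2⟩
    exact ⟨hx, by simp [h1, h2]⟩
  · rintro ⟨hx, h⟩
    have h' : u x + w x = M + N := h
    have h1 := hM x hx
    have h2 := hN x hx
    exact ⟨⟨hx, by linarith⟩, hx, by linarith⟩

/-- The (algebraic) relative interior. -/
def algRelint {m : ℕ} (E : Set (Fin m → ℝ)) : Set (Fin m → ℝ) :=
  {x | x ∈ E ∧ ∀ y ∈ E, ∃ ε : ℝ, 0 < ε ∧ x + ε • (x - y) ∈ E}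

lemma algRelint_subset {m : ℕ} (E : Set (Fin m → ℝ)) : algRelint E ⊆ E := fun _ h => h.1

/-- A face meeting the relative interior of `E` contains `E`. -/
lemma IsFaceOf.subset_of_mem_algRelint {m : ℕ} {P E F : Set (Fin m → ℝ)} (hP : P.Nonempty)
    (hE : IsFaceOf P E) (hF : IsFaceOf P F) {x : Fin m → ℝ} (hx : x ∈ algRelint E) (hxF : x ∈ F) :
    E ⊆ F := by
  intro y hy
  obtain ⟨ε, hε, h⟩ := hx.2 y hy
  exact hF.mem_of_prolong hP hxF (hE.subset hy) hε (hE.subset h)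

lemma combo_mem_algRelint {m : ℕ} {E : Set (Fin m → ℝ)} (hc : Convex ℝ E) {x y : Fin m → ℝ}
    (hx : x ∈ algRelint E) (hy : y ∈ E) {a b : ℝ} (ha : 0 < a) (hb : 0 ≤ b) (hab : a + b = 1) :
    a • x + b • y ∈ algRelint E := by
  refine ⟨hc hx.1 hy ha.le hb hab, fun z hz => ?_⟩
  obtain ⟨ε, hε, h⟩ := hx.2 z hz
  -- Prolonging by `δ = a ε / (1 + b ε)` gives a combination of `x + ε (x - z)` and `y`.
  have hd : 0 < 1 + b * ε := by positivity
  refine ⟨a * ε / (1 + b * ε), by positivity, ?_⟩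
  have h1 := hc h hy (a := a / (1 + b * ε)) (b := b * (1 + ε) / (1 + b * ε)) (by positivity)
    (by positivity) (by rw [← add_div, div_eq_one_iff_eq hd.ne']; linear_combination hab)
  convert h1 using 1
  ext i
  simp only [Pi.add_apply, Pi.smul_apply, Pi.sub_apply, smul_eq_mul]
  obtain rfl : a = 1 - b := by linarith
  field_simp
  ring

lemma convex_algRelint {m : ℕ} {E : Set (Fin m → ℝ)} (hc : Convex ℝ E) :
    Convex ℝ (algRelint E) := by
  intro x hx y hy a b ha hb hab
  rcases ha.eq_or_lt with rfl | ha
  · obtain rfl : b = 1 := by linarith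
    simpa using hy
  · exact combo_mem_algRelint hc hx hy.1 ha hb hab

lemma relOpen_algRelint {m : ℕ} {E : Set (Fin m → ℝ)} (hc : Convex ℝ E) :
    RelOpen (algRelint E) := by
  intro x hx y hy
  obtain ⟨ε, hε, h⟩ := hx.2 y hy.1
  refine ⟨ε / 2, by positivity, ?_⟩
  convert combo_mem_algRelint hc hx h (a := 1 / 2) (b := 1 / 2) (by norm_num) (by norm_num)
    (by norm_num) using 1
  ext i
  simp
  ring

lemma vectorSpan_algRelint {m : ℕ} {E : Set (Fin m → ℝ)} (hc : Convex ℝ E)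
    (hne : (algRelint E).Nonempty) : vectorSpan ℝ (algRelint E) = vectorSpan ℝ E := by
  apply le_antisymm (vectorSpan_mono ℝ (algRelint_subset E))
  obtain ⟨x, hx⟩ := hne
  rw [vectorSpan_eq_span_vsub_set_right ℝ hx.1, Submodule.span_le]
  rintro _ ⟨y, hy, rfl⟩
  have h1 := combo_mem_algRelint hc hx hy (a := 1 / 2) (b := 1 / 2) (by norm_num) (by norm_num)
    (by norm_num)
  have h2 := Submodule.smul_mem _ (2 : ℝ) (vsub_mem_vectorSpan ℝ h1 hx)
  have h3 : y - x = (2 : ℝ) • (((1 / 2 : ℝ) • x + (1 / 2 : ℝ) • y) -ᵥ x) := by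
    ext i
    simp
    ring
  change y - x ∈ vectorSpan ℝ (algRelint E)
  rw [h3]
  exact h2

/-- Every point of a polytope lies in the relative interior of a face, namely of the smallest face
containing it. -/
lemma exists_face_mem_algRelint {m : ℕ} (S : Finset (Fin m → ℝ)) {P : Set (Fin m → ℝ)}
    (hS : P = convexHull ℝ (S : Set (Fin m → ℝ))) (hfin : {F | IsFaceOf P F}.Finite)
    {x : Fin m → ℝ} (hx : x ∈ P) : ∃ E, IsFaceOf P E ∧ x ∈ algRelint E := by
  have hP : P.Nonempty := ⟨x, hx⟩
  obtain ⟨E, hE, hmin⟩ := Set.Finite.exists_minimal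
    (hfin.subset (show {F | IsFaceOf P F ∧ x ∈ F} ⊆ {F | IsFaceOf P F} from fun F h => h.1))
    ⟨P, Or.inl rfl, hx⟩
  have hle : ∀ F, IsFaceOf P F → x ∈ F → E ⊆ F := by
    intro F hF hxF
    have h1 : IsFaceOf P (E ∩ F) := hE.1.inter hP hF ⟨x, hE.2, hxF⟩
    exact (hmin ⟨h1, hE.2, hxF⟩ Set.inter_subset_left).trans Set.inter_subset_right
  refine ⟨E, hE.1, hE.2, fun y hy => ?_⟩
  rcases exists_prolong_or_separate S (hS ▸ hx) y with ⟨ε, hε, h⟩ | ⟨u, hu, huy⟩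
  · rw [← hS] at h
    refine ⟨ε, hε, ?_⟩
    obtain ⟨-, w, M, hM, hEw⟩ := (isFaceOf_iff hP).1 hE.1
    have h1 : w x = M := (hEw ▸ hE.2 : x ∈ {x | x ∈ P ∧ w x = M}).2
    have h2 : w y = M := (hEw ▸ hy : y ∈ {x | x ∈ P ∧ w x = M}).2
    rw [hEw]
    exact ⟨h, by simp [h1, h2]⟩
  · rw [← hS] at hu
    have h1 : IsFaceOf P {z | z ∈ P ∧ u z = u x} :=
      (isFaceOf_iff hP).2 ⟨⟨x, hx, rfl⟩, u, u x, hu, rfl⟩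
    exact absurd (hle _ h1 ⟨hx, rfl⟩ hy).2 huy.ne

/-- A point of the face `E` whose smallest face is as large as possible is interior to `E`. -/
lemma algRelint_nonempty {m : ℕ} (S : Finset (Fin m → ℝ)) {P : Set (Fin m → ℝ)} (hP : P.Nonempty)
    (hS : P = convexHull ℝ (S : Set (Fin m → ℝ))) (hfin : {F | IsFaceOf P F}.Finite)
    {E : Set (Fin m → ℝ)} (hE : IsFaceOf P E) : (algRelint E).Nonempty := by
  have hconv : Convex ℝ P := hS ▸ convex_convexHull ℝ _
  obtain ⟨x₀, hx₀⟩ := hE.nonempty hP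
  obtain ⟨E₀, hE₀, hxE₀⟩ := exists_face_mem_algRelint S hS hfin (hE.subset hx₀)
  obtain ⟨G, ⟨hG, x, hxE, hxG⟩, hmax⟩ := Set.Finite.exists_maximal
    (hfin.subset (show {F | IsFaceOf P F ∧ ∃ x ∈ E, x ∈ algRelint F} ⊆ {F | IsFaceOf P F} from
      fun F h => h.1)) ⟨E₀, hE₀, x₀, hx₀, hxE₀⟩
  have hGE : G ⊆ E := hG.subset_of_mem_algRelint hP hE hxG hxE
  have hEG : E ⊆ G := by
    intro y hy
    have hz : (1 / 2 : ℝ) • x + (1 / 2 : ℝ) • y ∈ E :=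
      hE.convex hP hconv hxE hy (by norm_num) (by norm_num) (by norm_num)
    obtain ⟨H, hH, hzH⟩ := exists_face_mem_algRelint S hS hfin (hE.subset hz)
    have hxH : x ∈ H := hH.mem_of_combo hP (hE.subset hxE) (hE.subset hy) (by norm_num)
      (by norm_num) (by norm_num) hzH.1
    have hyH : y ∈ H := hH.mem_of_combo hP (hE.subset hy) (hE.subset hxE) (a := 1 / 2)
      (b := 1 / 2) (by norm_num) (by norm_num) (by norm_num) (by rw [add_comm]; exact hzH.1)
    exact hmax ⟨hH, _, hz, hzH⟩ (hG.subset_of_mem_algRelint hP hH hxG hxH) hyH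
  rw [hEG.antisymm hGE]
  exact ⟨x, hxG⟩

lemma faceDim_lt {m : ℕ} {P E F : Set (Fin m → ℝ)} (hP : P.Nonempty) (hE : IsFaceOf P E)
    (hF : IsFaceOf P F) (h : E ⊂ F) : faceDim E < faceDim F := by
  rw [faceDim_eq, faceDim_eq]
  obtain ⟨⟨x, hx⟩, u, M, hM, hEu⟩ := (isFaceOf_iff hP).1 hE
  obtain ⟨y, hyF, hyE⟩ := Set.exists_of_ssubset h
  refine Submodule.finrank_lt_finrank_of_lt (lt_of_le_of_ne (vectorSpan_mono ℝ h.1) fun heq => ?_)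
  have hker : vectorSpan ℝ E ≤ LinearMap.ker u := by
    rw [vectorSpan_def, Submodule.span_le]
    rintro _ ⟨a, ha, b, hb, rfl⟩
    rw [hEu] at ha hb
    simp [ha.2, hb.2]
  have h1 : y -ᵥ x ∈ vectorSpan ℝ F := vsub_mem_vectorSpan ℝ hyF (h.1 hx)
  rw [← heq] at h1
  have h2 : u y - u x = 0 := by simpa using hker h1
  rw [hEu] at hx hyE
  exact hyE ⟨hF.subset hyF, by linarith [hx.2]⟩

/-! ### The face lattice is Eulerian -/

/-- Euler's relation for the nonempty faces of a face `G`: the relative interiors of these faces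
partition `G`. -/
lemma euler_lower {m : ℕ} (S : Finset (Fin m → ℝ)) {P : Set (Fin m → ℝ)} (hP : P.Nonempty)
    (hS : P = convexHull ℝ (S : Set (Fin m → ℝ))) (hfin : {F | IsFaceOf P F}.Finite)
    {G : Set (Fin m → ℝ)} (hG : IsFaceOf P G) :
    ∑ E ∈ hfin.toFinset.filter (fun E => E ⊆ G), (-1 : ℤ) ^ faceDim E = 1 := by
  have hconv : Convex ℝ P := hS ▸ convex_convexHull ℝ _
  have hcomp : IsCompact P := hS ▸ S.finite_toSet.isCompact_convexHull ℝ
  have hI : ∀ E, E ∈ hfin.toFinset.filter (fun E => E ⊆ G) ↔ IsFaceOf P E ∧ E ⊆ G := by simp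
  refine Eq.trans ?_ (sum_neg_one_pow_finrank_eq_one (hfin.toFinset.filter (fun E => E ⊆ G)) G (hG.nonempty hP)
    (hG.convex hP hconv) (hG.isCompact hP hcomp) algRelint ?_ ?_ ?_ ?_ ?_ ?_)
  · refine Finset.sum_congr rfl fun E hE => ?_
    have hE' := ((hI E).1 hE).1
    rw [faceDim_eq, vectorSpan_algRelint (hE'.convex hP hconv)
      (algRelint_nonempty S hP hS hfin hE')]
  · exact fun E hE => algRelint_nonempty S hP hS hfin ((hI E).1 hE).1
  · exact fun E hE => convex_algRelint (((hI E).1 hE).1.convex hP hconv)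
  · exact fun E hE => relOpen_algRelint (((hI E).1 hE).1.convex hP hconv)
  · exact fun E hE => (algRelint_subset E).trans ((hI E).1 hE).2
  · intro x hx
    obtain ⟨E, hE, hxE⟩ := exists_face_mem_algRelint S hS hfin (hG.subset hx)
    exact ⟨E, (hI E).2 ⟨hE, hE.subset_of_mem_algRelint hP hG hxE hx⟩, hxE⟩
  · intro x E hE E' hE' hx hx'
    exact (((hI E).1 hE).1.subset_of_mem_algRelint hP ((hI E').1 hE').1 hx hx'.1).antisymm
      (((hI E').1 hE').1.subset_of_mem_algRelint hP ((hI E).1 hE).1 hx' hx.1)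

lemma exists_projection {m : ℕ} (W : Submodule ℝ (Fin m → ℝ)) :
    ∃ π : (Fin m → ℝ) →ₗ[ℝ] (Fin m → ℝ), LinearMap.ker π = W ∧ ∀ x, π x - x ∈ W := by
  obtain ⟨s, hs⟩ := W.mkQ.exists_rightInverse_of_surjective (Submodule.range_mkQ W)
  have hs' : ∀ x, W.mkQ (s x) = x := fun x => LinearMap.congr_fun hs x
  refine ⟨s ∘ₗ W.mkQ, ?_, fun x => ?_⟩
  · ext x
    rw [LinearMap.mem_ker, LinearMap.comp_apply]
    constructor
    · intro h
      have h1 := hs' (W.mkQ x)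
      rw [h, map_zero] at h1
      simpa using h1.symm
    · intro h
      have h1 : W.mkQ x = 0 := by simpa using h
      rw [h1, map_zero]
  · have h1 := hs' (W.mkQ x)
    rw [← sub_eq_zero, ← map_sub] at h1
    exact (Submodule.Quotient.mk_eq_zero W).1 h1

/-- Euler's relation for the faces strictly above `F` and below `G`.  After projecting along the
span of `F`, the face `F` becomes a vertex, and a hyperplane close to this vertex cuts the
projection of `G` in a compact convex set, which is partitioned by the sections of the relative
interiors of the faces above `F`. -/
lemma euler_interval {m : ℕ} (S : Finset (Fin m → ℝ)) {P : Set (Fin m → ℝ)} (hP : P.Nonempty)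
    (hS : P = convexHull ℝ (S : Set (Fin m → ℝ))) (hfin : {F | IsFaceOf P F}.Finite)
    {F G : Set (Fin m → ℝ)} (hF : IsFaceOf P F) (hG : IsFaceOf P G) (hFG : F ⊂ G) :
    ∑ E ∈ hfin.toFinset.filter (fun E => F ⊂ E ∧ E ⊆ G),
      (-1 : ℤ) ^ (faceDim E - faceDim F - 1) = 1 := by
  have hconv : Convex ℝ P := hS ▸ convex_convexHull ℝ _
  have hcomp : IsCompact P := hS ▸ S.finite_toSet.isCompact_convexHull ℝ
  set I := hfin.toFinset.filter (fun E => F ⊂ E ∧ E ⊆ G) with hIdef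
  have hI : ∀ E, E ∈ I ↔ IsFaceOf P E ∧ F ⊂ E ∧ E ⊆ G := by simp [hIdef]
  obtain ⟨π, hker, hπ⟩ := exists_projection (vectorSpan ℝ F)
  obtain ⟨p₀, hp₀⟩ := algRelint_nonempty S hP hS hfin hF
  obtain ⟨-, w, M, hwM, hFw⟩ := (isFaceOf_iff hP).1 hF
  have hFw' : ∀ x, x ∈ F ↔ x ∈ P ∧ w x = M := fun x => by rw [hFw]; rfl
  -- A functional defining a face above `F` is constant on `F`, hence factors through `π`.
  have hinv : ∀ (u : (Fin m → ℝ) →ₗ[ℝ] ℝ) (N : ℝ), (∀ x ∈ F, u x = N) → ∀ x, u (π x) = u x := by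
    intro u N hu x
    have hle : vectorSpan ℝ F ≤ LinearMap.ker u := by
      rw [vectorSpan_def, Submodule.span_le]
      rintro _ ⟨a, ha, b, hb, rfl⟩
      simp [hu a ha, hu b hb]
    have := hle (hπ x)
    simpa [sub_eq_zero] using this
  have hwπ : ∀ x, w (π x) = w x := hinv w M fun x hx => ((hFw' x).1 hx).2
  have hfiber : ∀ E, IsFaceOf P E → F ⊆ E → ∀ x ∈ E, ∀ y ∈ P, π x = π y → y ∈ E := by
    intro E hE hFE x hx y hy hxy
    obtain ⟨-, u, N, -, hEu⟩ := (isFaceOf_iff hP).1 hE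
    have hEu' : ∀ x, x ∈ E ↔ x ∈ P ∧ u x = N := fun x => by rw [hEu]; rfl
    have huπ := hinv u N fun x hx => ((hEu' x).1 (hFE hx)).2
    rw [hEu'] at hx ⊢
    refine ⟨hy, ?_⟩
    rw [← huπ, ← hxy, huπ, hx.2]
  have hlow : ∀ E ∈ I, ∃ y ∈ algRelint E, w y < M := by
    intro E hE
    obtain ⟨hE1, hE2, hE3⟩ := (hI E).1 hE
    obtain ⟨y, hy⟩ := algRelint_nonempty S hP hS hfin hE1
    refine ⟨y, hy, lt_of_le_of_ne (hwM y (hE1.subset hy.1)) fun h => hE2.2 ?_⟩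
    exact hE1.subset_of_mem_algRelint hP hF hy ((hFw' y).2 ⟨hE1.subset hy.1, h⟩)
  choose! y hyE hyM using hlow
  obtain ⟨t, htM, htS, htI⟩ : ∃ t, t < M ∧ (∀ s ∈ S, w s < M → w s < t) ∧ ∀ E ∈ I, w (y E) < t := by
    have h1 : ∀ᶠ t in nhdsWithin M (Set.Iio M), t < M := self_mem_nhdsWithin
    have h2 : ∀ᶠ t in nhdsWithin M (Set.Iio M), ∀ s ∈ S, w s < M → w s < t := by
      refine (Filter.eventually_all_finset S).2 fun s _ => ?_
      by_cases hs : w s < M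
      · filter_upwards [Ioo_mem_nhdsLT hs] with t ht _ using ht.1
      · exact Filter.Eventually.of_forall fun t h => absurd h hs
    have h3 : ∀ᶠ t in nhdsWithin M (Set.Iio M), ∀ E ∈ I, w (y E) < t := by
      refine (Filter.eventually_all_finset I).2 fun E hE => ?_
      filter_upwards [Ioo_mem_nhdsLT (hyM E hE)] with t ht using ht.1
    exact (h1.and (h2.and h3)).exists
  have hp₀M : w p₀ = M := ((hFw' p₀).1 hp₀.1).2
  have hpoint : ∀ E ∈ I, ∃ x ∈ algRelint E, w x = t := by
    intro E hE
    obtain ⟨hE1, hE2, hE3⟩ := (hI E).1 hE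
    have h1 := hyM E hE
    have h2 := htI E hE
    have hd : 0 < M - w (y E) := by linarith
    refine ⟨_, combo_mem_algRelint (hE1.convex hP hconv) (hyE E hE) (hE2.1 hp₀.1)
      (a := (M - t) / (M - w (y E))) (b := (t - w (y E)) / (M - w (y E)))
      (div_pos (by linarith) hd) (div_nonneg (by linarith) hd.le)
      (by rw [← add_div, div_eq_one_iff_eq hd.ne']; ring), ?_⟩
    simp only [map_add, map_smul, smul_eq_mul, hp₀M]
    field_simp
    ring
  have hGI : G ∈ I := (hI G).2 ⟨hG, hFG, subset_rfl⟩
  refine Eq.trans ?_ (sum_neg_one_pow_finrank_eq_one I (π '' G ∩ {x | w x = t}) ?_ ?_ ?_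
    (fun E => π '' algRelint E ∩ {x | w x = t}) ?_ ?_ ?_ ?_ ?_ ?_)
  · refine Finset.sum_congr rfl fun E hE => ?_
    obtain ⟨hE1, hE2, hE3⟩ := (hI E).1 hE
    obtain ⟨x, hx, hxt⟩ := hpoint E hE
    have hEc := hE1.convex hP hconv
    have h1 := ((relOpen_algRelint hEc).image π).finrank_inter_level
      ((convex_algRelint hEc).linear_image π) w (t := t) (Set.mem_image_of_mem π hx)
      (by rw [hwπ, hxt]) (Set.mem_image_of_mem π hx) (Set.mem_image_of_mem π (hyE E hE))
      (by rw [hwπ, hwπ, hxt]; exact (htI E hE).ne')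
    have h2 : vectorSpan ℝ (π '' algRelint E) = (vectorSpan ℝ E).map π := by
      rw [← vectorSpan_algRelint hEc ⟨x, hx⟩]
      exact (AffineMap.map_vectorSpan π.toAffineMap).symm
    have h3 := finrank_map_add_finrank_inf_ker (vectorSpan ℝ E) π
    rw [hker, inf_eq_right.2 (vectorSpan_mono ℝ hE2.1), ← faceDim_eq, ← faceDim_eq, ← h2] at h3
    congr 1
    omega
  · obtain ⟨x, hx, hxt⟩ := hpoint G hGI
    exact ⟨π x, Set.mem_image_of_mem π hx.1, by rw [Set.mem_ofPred_eq, hwπ, hxt]⟩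
  · exact ((hG.convex hP hconv).linear_image π).inter (convex_level w t)
  · exact ((hG.isCompact hP hcomp).image π.continuous_of_finiteDimensional).inter_right
      (isClosed_singleton.preimage w.continuous_of_finiteDimensional)
  · intro E hE
    obtain ⟨x, hx, hxt⟩ := hpoint E hE
    exact ⟨π x, Set.mem_image_of_mem π hx, by rw [Set.mem_ofPred_eq, hwπ, hxt]⟩
  · exact fun E hE => ((convex_algRelint (((hI E).1 hE).1.convex hP hconv)).linear_image π).inter
      (convex_level w t)
  · exact fun E hE => ((relOpen_algRelint (((hI E).1 hE).1.convex hP hconv)).image π).inter_level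
      w t
  · exact fun E hE => Set.inter_subset_inter_left _
      (Set.image_mono ((algRelint_subset E).trans ((hI E).1 hE).2.2))
  · rintro _ ⟨⟨x, hx, rfl⟩, hxt⟩
    have hxt' : w x = t := by rw [← hwπ]; exact hxt
    -- Since `w x = t` exceeds `w` at the points of `S` outside `F`, a point `f ∈ F` has positive
    -- weight in `x`; replacing it by the interior point `p₀` of `F` does not change the projection.
    obtain ⟨f, hf, z, hz, a, b, ha, hb, hab, hfz⟩ :
        ∃ f ∈ F, ∃ z ∈ P, ∃ a b : ℝ, 0 < a ∧ 0 ≤ b ∧ a + b = 1 ∧ a • f + b • z = x := by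
      have hSP : (S : Set (Fin m → ℝ)) ⊆ P := hS ▸ subset_convexHull ℝ _
      have hlt : ∀ z ∈ convexHull ℝ {s | s ∈ S ∧ w s < M}, w z < t := fun z hz =>
        convexHull_min (s := {s | s ∈ S ∧ w s < M}) (t := {z | w z < t})
          (fun s hs => htS s hs.1 hs.2) (convex_halfSpace_lt w.isLinear t) hz
      have hxS : x ∈ convexHull ℝ ({s | s ∈ S ∧ w s = M} ∪ {s | s ∈ S ∧ w s < M}) := by
        have : (S : Set (Fin m → ℝ)) = {s | s ∈ S ∧ w s = M} ∪ {s | s ∈ S ∧ w s < M} := by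
          ext s
          constructor
          · intro hs
            rcases (hwM s (hSP hs)).eq_or_lt with h | h
            · exact Or.inl ⟨hs, h⟩
            · exact Or.inr ⟨hs, h⟩
          · rintro (h | h)
            · exact h.1
            · exact h.1
        rw [← this, ← hS]
        exact hG.subset hx
      have hFsub : convexHull ℝ {s | s ∈ S ∧ w s = M} ⊆ F :=
        convexHull_min (fun s hs => (hFw' s).2 ⟨hSP hs.1, hs.2⟩) (hF.convex hP hconv)
      rcases Set.eq_empty_or_nonempty {s | s ∈ S ∧ w s = M} with h0 | h0
      · rw [h0, Set.empty_union] at hxS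
        exact absurd (hlt x hxS) (by linarith)
      rcases Set.eq_empty_or_nonempty {s | s ∈ S ∧ w s < M} with h0' | h0'
      · rw [h0', Set.union_empty] at hxS
        have := ((hFw' x).1 (hFsub hxS)).2
        linarith
      rw [convexHull_union h0 h0', mem_convexJoin] at hxS
      obtain ⟨f, hf, z, hz, a, b, ha, hb, hab, hfz⟩ := hxS
      refine ⟨f, hFsub hf, z, ?_, a, b, lt_of_le_of_ne ha fun h => ?_, hb, hab, hfz⟩
      · rw [hS]
        exact convexHull_mono (fun s hs => hs.1) hz
      · subst h
        obtain rfl : b = 1 := by linarith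
        have := hlt z hz
        rw [zero_smul, one_smul, zero_add] at hfz
        rw [hfz] at this
        linarith
    have hp₀P : p₀ ∈ P := hF.subset hp₀.1
    have hx'P : a • p₀ + b • z ∈ P := hconv hp₀P hz ha.le hb hab
    have hπx : π (a • p₀ + b • z) = π x := by
      have h1 : p₀ - f ∈ LinearMap.ker π := hker ▸ vsub_mem_vectorSpan ℝ hp₀.1 hf
      have h2 : π p₀ = π f := by simpa [sub_eq_zero] using h1
      simp only [← hfz, map_add, map_smul, h2]
    obtain ⟨E, hE, hxE⟩ := exists_face_mem_algRelint S hS hfin hx'P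
    have hFE : F ⊆ E := hF.subset_of_mem_algRelint hP hE hp₀
      (hE.mem_of_combo hP hp₀P hz ha hb hab hxE.1)
    have hEG : E ⊆ G := hE.subset_of_mem_algRelint hP hG hxE
      (hfiber G hG hFG.1 x hx _ hx'P hπx.symm)
    refine ⟨E, (hI E).2 ⟨hE, ⟨hFE, fun hEF => ?_⟩, hEG⟩, ⟨_, hxE, hπx⟩, hxt⟩
    have h1 := ((hFw' _).1 (hEF hxE.1)).2
    rw [← hwπ, hπx, hwπ, hxt'] at h1
    linarith
  · rintro x E hE E' hE' ⟨⟨a, ha, rfl⟩, -⟩ ⟨⟨b, hb, hab⟩, -⟩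
    obtain ⟨hE1, hE2, -⟩ := (hI E).1 hE
    obtain ⟨hE1', hE2', -⟩ := (hI E').1 hE'
    exact (hE1.subset_of_mem_algRelint hP hE1' ha
        (hfiber E' hE1' hE2'.1 b hb.1 a (hE1.subset ha.1) hab)).antisymm
      (hE1'.subset_of_mem_algRelint hP hE1 hb
        (hfiber E hE1 hE2.1 a ha.1 b (hE1'.subset hb.1) hab.symm))

/-! ### Palindromic polynomials and the recursion -/

lemma coeff_gTrunc (p : ℚ[X]) (k j : ℕ) :
    (C (p.coeff 0) + ∑ l ∈ Finset.Icc 1 k, C (p.coeff l - p.coeff (l - 1)) * X ^ l).coeff j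
      = if j ≤ k then p.coeff j - (if j = 0 then 0 else p.coeff (j - 1)) else 0 := by
  rw [coeff_add, finsetSum_coeff, coeff_C]
  simp only [coeff_C_mul_X_pow, Finset.sum_ite_eq, Finset.mem_Icc]
  by_cases hj : j = 0
  · simp [hj]
  · simp [hj, Nat.one_le_iff_ne_zero]

/-- If `p` is palindromic of degree `d`, then `(1 - x) p` is antipalindromic of degree `d + 1`, and
its truncation `q` to degrees at most `d / 2` satisfies `(1 - x) p = q - x ^ (d + 1) q(1/x)`. -/
lemma reflect_gTrunc {p q : ℚ[X]} {d : ℕ} (hd : p.natDegree ≤ d) (hp : reflect d p = p)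
    (hq : q = C (p.coeff 0) + ∑ l ∈ Finset.Icc 1 (d / 2), C (p.coeff l - p.coeff (l - 1)) * X ^ l) :
    reflect (d + 1) q = q + (X - 1) * p := by
  have hsym : ∀ i j, i + j = d → p.coeff i = p.coeff j := by
    intro i j hij
    conv_lhs => rw [← hp]
    rw [coeff_reflect, revAt_le (by omega)]
    congr 1
    omega
  have hzero : ∀ i, d < i → p.coeff i = 0 := fun i hi => coeff_eq_zero_of_natDegree_lt (by omega)
  ext j
  rw [coeff_reflect, coeff_add, sub_mul, one_mul, coeff_sub, hq, coeff_gTrunc, coeff_gTrunc]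
  rcases Nat.lt_or_ge (d + 1) j with hj | hj
  · rw [revAt_eq_self_of_lt hj]
    obtain ⟨i, rfl⟩ : ∃ i, j = i + 1 := ⟨j - 1, by omega⟩
    rw [coeff_X_mul, hzero i (by omega), hzero (i + 1) (by omega)]
    simp
  · rw [revAt_le hj]
    rcases Nat.eq_zero_or_pos j with rfl | hj0
    · simp only [coeff_X_mul_zero]
      rw [if_neg (by omega)]
      simp
    · obtain ⟨i, rfl⟩ : ∃ i, j = i + 1 := ⟨j - 1, by omega⟩
      rw [coeff_X_mul, if_neg (Nat.succ_ne_zero i)]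
      simp only [Nat.add_sub_cancel]
      by_cases h1 : i + 1 ≤ d / 2
      · rw [if_pos h1, if_neg (by omega)]
        ring
      · rw [if_neg h1]
        by_cases h2 : d + 1 - (i + 1) ≤ d / 2
        · rw [if_pos h2, hsym (d + 1 - (i + 1)) i (by omega)]
          by_cases h3 : d + 1 - (i + 1) = 0
          · rw [if_pos h3, hzero (i + 1) (by omega)]
            ring
          · rw [if_neg h3, hsym (d + 1 - (i + 1) - 1) (i + 1) (by omega)]
            ring
        · -- Both degrees exceed `d / 2`: the middle coefficient of an odd palindrome.
          rw [if_neg h2, hsym (i + 1) i (by omega)]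
          ring

lemma natDegree_X_sub_one_pow_le (k : ℕ) : ((X - 1 : ℚ[X]) ^ k).natDegree ≤ k := by
  have h := natDegree_pow_X_add_C k (-1 : ℚ)
  rw [C_neg, C_1, ← sub_eq_add_neg] at h
  exact h.le

lemma reflect_X_sub_one_pow (k : ℕ) :
    reflect k ((X - 1 : ℚ[X]) ^ k) = (-1) ^ k * (X - 1) ^ k := by
  induction k with
  | zero => simp [reflect_one]
  | succ k ih =>
    have h1 : reflect 1 (X - 1 : ℚ[X]) = 1 - X := by
      rw [sub_eq_add_neg, reflect_add, reflect_neg, reflect_one_X, reflect_one, pow_one,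
        ← sub_eq_add_neg]
    have h2 := natDegree_X_sub_one_pow_le 1
    rw [pow_one] at h2
    rw [pow_succ, reflect_mul _ _ (natDegree_X_sub_one_pow_le k) h2, ih, h1]
    ring

lemma reflect_finset_sum {ι : Type*} (s : Finset ι) (N : ℕ) (p : ι → ℚ[X]) :
    reflect N (∑ i ∈ s, p i) = ∑ i ∈ s, reflect N (p i) := by
  induction s using Finset.induction with
  | empty => simp
  | insert a s ha ih => rw [Finset.sum_insert ha, Finset.sum_insert ha, reflect_add, ih]

lemma filter_subset_eq_insert {α : Type*} (I : Finset (Set α)) {F : Set α} (hF : F ∈ I) :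
    I.filter (fun E => E ⊆ F) = insert F (I.filter (fun E => E ⊂ F)) := by
  ext E
  simp only [Finset.mem_filter, Finset.mem_insert]
  constructor
  · rintro ⟨h, h'⟩
    rcases h'.eq_or_ssubset with rfl | h''
    · exact Or.inl rfl
    · exact Or.inr ⟨h, h''⟩
  · rintro (rfl | ⟨h, hss⟩)
    · exact ⟨hF, subset_rfl⟩
    · exact ⟨h, hss.1⟩

/-- The recursion for `f` and `g` over a finite family `I` of sets graded by `d`.  The Eulerian
hypotheses `h₀` (intervals starting at the empty face) and `h₁` (all other intervals) make each `f F`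
palindromic. -/
lemma reflect_g_of_eulerian {α : Type*} (I : Finset (Set α)) (d : Set α → ℕ)
    (hd : ∀ E ∈ I, ∀ F ∈ I, E ⊂ F → d E < d F)
    (h₀ : ∀ F ∈ I, (-1 : ℚ[X]) ^ d F
      + ∑ E ∈ I.filter (fun E => E ⊂ F), (-1 : ℚ[X]) ^ (d F - 1 - d E) = 1)
    (h₁ : ∀ E' ∈ I, ∀ F ∈ I, E' ⊂ F →
      ∑ E ∈ I.filter (fun E => E' ⊆ E ∧ E ⊂ F), (-1 : ℚ[X]) ^ (d F - 1 - d E) = 1)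
    (f g : Set α → ℚ[X])
    (hf : ∀ F ∈ I, f F = (X - 1) ^ d F
      + ∑ E ∈ I.filter (fun E => E ⊂ F), g E * (X - 1) ^ (d F - 1 - d E))
    (hg : ∀ F ∈ I, g F = C ((f F).coeff 0)
      + ∑ l ∈ Finset.Icc 1 (d F / 2), C ((f F).coeff l - (f F).coeff (l - 1)) * X ^ l) :
    ∀ F ∈ I, (g F).natDegree ≤ d F + 1 ∧ reflect (d F + 1) (g F)
      = (X - 1) ^ (d F + 1) + ∑ E ∈ I.filter (fun E => E ⊆ F), g E * (X - 1) ^ (d F - d E) := by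
  have hdeg : ∀ F ∈ I, (g F).natDegree ≤ d F / 2 := by
    intro F hF
    rw [natDegree_le_iff_coeff_eq_zero]
    intro j hj
    rw [hg F hF, coeff_gTrunc, if_neg (by omega)]
  suffices H : ∀ (k : ℕ), ∀ F ∈ I, d F = k → reflect (d F + 1) (g F)
      = (X - 1) ^ (d F + 1) + ∑ E ∈ I.filter (fun E => E ⊆ F), g E * (X - 1) ^ (d F - d E) from
    fun F hF => ⟨(hdeg F hF).trans (by omega), H (d F) F hF rfl⟩
  intro k
  induction k using Nat.strong_induction_on with
  | _ k ih =>
  intro F hF hk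
  have hlt : ∀ E ∈ I.filter (fun E => E ⊂ F), E ∈ I ∧ E ⊂ F ∧ d E < d F := by
    intro E hE
    rw [Finset.mem_filter] at hE
    exact ⟨hE.1, hE.2, hd E hE.1 F hF hE.2⟩
  have hfdeg : (f F).natDegree ≤ d F := by
    rw [hf F hF]
    refine natDegree_add_le_of_degree_le (natDegree_X_sub_one_pow_le _) ?_
    refine natDegree_sum_le_of_forall_le _ _ fun E hE => ?_
    obtain ⟨hEI, -, hEd⟩ := hlt E hE
    refine natDegree_mul_le.trans ?_
    have h1 := hdeg E hEI
    have h2 := natDegree_X_sub_one_pow_le (d F - 1 - d E)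
    omega
  have hpal : reflect (d F) (f F) = f F := by
    conv_lhs => rw [hf F hF]
    rw [reflect_add, reflect_X_sub_one_pow, reflect_finset_sum]
    have hterm : ∀ E ∈ I.filter (fun E => E ⊂ F),
        reflect (d F) (g E * (X - 1) ^ (d F - 1 - d E))
          = (-1) ^ (d F - 1 - d E) * (X - 1) ^ d F
            + ∑ E' ∈ I.filter (fun E' => E' ⊆ E),
              g E' * (X - 1) ^ (d F - 1 - d E') * (-1) ^ (d F - 1 - d E) := by
      intro E hE
      obtain ⟨hEI, -, hEd⟩ := hlt E hE
      have hsplit : d F = (d E + 1) + (d F - 1 - d E) := by omega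
      have h1 : reflect (d F) (g E * (X - 1) ^ (d F - 1 - d E))
          = reflect (d E + 1) (g E) * reflect (d F - 1 - d E) ((X - 1) ^ (d F - 1 - d E)) := by
        rw [← reflect_mul _ _ ((hdeg E hEI).trans (by omega)) (natDegree_X_sub_one_pow_le _),
          ← hsplit]
      rw [h1, ih (d E) (by omega) E hEI rfl, reflect_X_sub_one_pow, add_mul, Finset.sum_mul]
      congr 1
      · have : (X - 1 : ℚ[X]) ^ d F = (X - 1) ^ (d E + 1) * (X - 1) ^ (d F - 1 - d E) := by
          rw [← pow_add, ← hsplit]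
        rw [this]
        ring
      · refine Finset.sum_congr rfl fun E' hE' => ?_
        rw [Finset.mem_filter] at hE'
        have hle : d E' ≤ d E := by
          rcases hE'.2.eq_or_ssubset with rfl | h
          · exact le_rfl
          · exact (hd E' hE'.1 E hEI h).le
        have : (X - 1 : ℚ[X]) ^ (d F - 1 - d E')
            = (X - 1) ^ (d E - d E') * (X - 1) ^ (d F - 1 - d E) := by
          rw [← pow_add]
          congr 1
          omega
        rw [this]
        ring
    rw [Finset.sum_congr rfl hterm, Finset.sum_add_distrib, ← Finset.sum_mul, ← add_assoc,
      ← add_mul, h₀ F hF, one_mul]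
    conv_rhs => rw [hf F hF]
    congr 1
    rw [Finset.sum_comm' (t' := I.filter (fun E => E ⊂ F))
      (s' := fun E' => I.filter (fun E => E' ⊆ E ∧ E ⊂ F))]
    · refine Finset.sum_congr rfl fun E' hE' => ?_
      obtain ⟨hEI, hEF, -⟩ := hlt E' hE'
      rw [← Finset.mul_sum, h₁ E' hEI F hF hEF, mul_one]
    · intro E E'
      simp only [Finset.mem_filter]
      constructor
      · rintro ⟨⟨h1, h2⟩, h3, h4⟩
        exact ⟨⟨h1, h4, h2⟩, h3, h4.trans_ssubset h2⟩
      · rintro ⟨⟨h1, h4, h2⟩, h3, -⟩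
        exact ⟨⟨h1, h2⟩, h3, h4⟩
  rw [reflect_gTrunc hfdeg hpal (hg F hF), filter_subset_eq_insert I hF,
    Finset.sum_insert (by simp), hf F hF, mul_add, Finset.mul_sum, Nat.sub_self, pow_zero, mul_one]
  have : ∑ E ∈ I.filter (fun E => E ⊂ F), (X - 1) * (g E * (X - 1) ^ (d F - 1 - d E))
      = ∑ E ∈ I.filter (fun E => E ⊂ F), g E * (X - 1) ^ (d F - d E) := by
    refine Finset.sum_congr rfl fun E hE => ?_
    obtain ⟨-, -, hEd⟩ := hlt E hE
    have hs : d F - d E = (d F - 1 - d E) + 1 := by omega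
    rw [hs, pow_succ]
    ring
  rw [this]
  ring

lemma neg_one_pow_mul_neg_one_pow (k : ℕ) : (-1 : ℚ[X]) ^ k * (-1) ^ k = 1 := by
  rw [← mul_pow]
  simp

/-- Let `P` be a polytope of dimension `n` with Stanley `f`- and
`g`-polynomials `(f_F)`, `(g_F)` of its faces.  Then
`x^{n+1} g_P(1/x) = ∑_{𝟎 ≤ F ≤ P} g_F(x) (x-1)^{n - dim F}`,
where the left-hand side means `∑_l b_l x^{n+1-l}` for `g_P = ∑_l b_l x^l`, and the
empty face `𝟎` (with `g_𝟎 = 1`, `dim 𝟎 = -1`) contributes the term `(x-1)^{n+1}`. -/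
theorem stmt3 (m n : ℕ) (P : Set (Fin m → ℝ))
    (S : Finset (Fin m → ℝ)) (hS : S.Nonempty) (hP : P = convexHull ℝ (S : Set (Fin m → ℝ)))
    (hdim : faceDim P = n)
    (hfin : {F : Set (Fin m → ℝ) | IsFaceOf P F}.Finite)
    (f g : Set (Fin m → ℝ) → Polynomial ℚ)
    (hf : ∀ F, IsFaceOf P F →
      f F = (Polynomial.X - 1) ^ faceDim F +
        ∑ E ∈ hfin.toFinset.filter (fun E => E ⊂ F),
          g E * (Polynomial.X - 1) ^ (faceDim F - 1 - faceDim E))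
    (hg : ∀ F, IsFaceOf P F →
      g F = Polynomial.C ((f F).coeff 0) +
        ∑ l ∈ Finset.Icc 1 (faceDim F / 2),
          Polynomial.C ((f F).coeff l - (f F).coeff (l - 1)) * Polynomial.X ^ l) :
    ∑ l ∈ Finset.range (n + 2), Polynomial.C ((g P).coeff l) * Polynomial.X ^ (n + 1 - l)
      = (Polynomial.X - 1) ^ (n + 1) +
        ∑ F ∈ hfin.toFinset, g F * (Polynomial.X - 1) ^ (n - faceDim F) := by
  have hne : P.Nonempty := by
    rw [hP]
    exact (Finset.coe_nonempty.2 hS).convexHull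
  have hI : ∀ F, F ∈ hfin.toFinset ↔ IsFaceOf P F := by simp
  have hlt : ∀ E ∈ hfin.toFinset, ∀ F ∈ hfin.toFinset, E ⊂ F → faceDim E < faceDim F :=
    fun E hE F hF h => faceDim_lt hne ((hI E).1 hE) ((hI F).1 hF) h
  -- Euler's relation for the faces of `F`, multiplied by `(-1) ^ dim F`; the first summand is the
  -- contribution of the empty face.
  have h₀ : ∀ F ∈ hfin.toFinset, (-1 : ℚ[X]) ^ faceDim F
      + ∑ E ∈ hfin.toFinset.filter (fun E => E ⊂ F), (-1 : ℚ[X]) ^ (faceDim F - 1 - faceDim E)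
      = 1 := by
    intro F hF
    have h := congrArg (Int.cast : ℤ → ℚ[X]) (euler_lower S hne hP hfin ((hI F).1 hF))
    rw [filter_subset_eq_insert _ hF, Finset.sum_insert (by simp)] at h
    push_cast at h
    have h2 : ∑ E ∈ hfin.toFinset.filter (fun E => E ⊂ F),
        (-1 : ℚ[X]) ^ (faceDim F - 1 - faceDim E)
        = -(-1) ^ faceDim F * ∑ E ∈ hfin.toFinset.filter (fun E => E ⊂ F),
          (-1 : ℚ[X]) ^ faceDim E := by
      rw [Finset.mul_sum]
      refine Finset.sum_congr rfl fun E hE => ?_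
      rw [Finset.mem_filter] at hE
      obtain ⟨k, hk⟩ : ∃ k, faceDim F = faceDim E + k + 1 :=
        ⟨faceDim F - faceDim E - 1, by have := hlt E hE.1 F hF hE.2; omega⟩
      rw [hk, show faceDim E + k + 1 - 1 - faceDim E = k by omega, pow_succ, pow_add]
      linear_combination (-(-1 : ℚ[X]) ^ k) * neg_one_pow_mul_neg_one_pow (faceDim E)
    rw [h2]
    linear_combination (-(-1 : ℚ[X]) ^ faceDim F) * h
      + neg_one_pow_mul_neg_one_pow (faceDim F)
  -- The same for the faces between a fixed face and `F`.
  have h₁ : ∀ E' ∈ hfin.toFinset, ∀ F ∈ hfin.toFinset, E' ⊂ F →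
      ∑ E ∈ hfin.toFinset.filter (fun E => E' ⊆ E ∧ E ⊂ F),
        (-1 : ℚ[X]) ^ (faceDim F - 1 - faceDim E) = 1 := by
    intro E' hE' F hF hEF
    have h := congrArg (Int.cast : ℤ → ℚ[X])
      (euler_interval S hne hP hfin ((hI E').1 hE') ((hI F).1 hF) hEF)
    have hs1 : hfin.toFinset.filter (fun E => E' ⊂ E ∧ E ⊆ F)
        = insert F (hfin.toFinset.filter (fun E => E' ⊂ E ∧ E ⊂ F)) := by
      ext E
      simp only [Finset.mem_filter, Finset.mem_insert]
      constructor
      · rintro ⟨h1, h2, h3⟩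
        rcases h3.eq_or_ssubset with rfl | h3
        · exact Or.inl rfl
        · exact Or.inr ⟨h1, h2, h3⟩
      · rintro (rfl | ⟨h1, h2, h3⟩)
        · exact ⟨hF, hEF, subset_rfl⟩
        · exact ⟨h1, h2, h3.1⟩
    have hs2 : hfin.toFinset.filter (fun E => E' ⊆ E ∧ E ⊂ F)
        = insert E' (hfin.toFinset.filter (fun E => E' ⊂ E ∧ E ⊂ F)) := by
      ext E
      simp only [Finset.mem_filter, Finset.mem_insert]
      constructor
      · rintro ⟨h1, h2, h3⟩
        rcases h2.eq_or_ssubset with rfl | h2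
        · exact Or.inl rfl
        · exact Or.inr ⟨h1, h2, h3⟩
      · rintro (rfl | ⟨h1, h2, h3⟩)
        · exact ⟨hE', subset_rfl, hEF⟩
        · exact ⟨h1, h2.1, h3⟩
    rw [hs1, Finset.sum_insert (by simp)] at h
    push_cast at h
    obtain ⟨k, hk⟩ : ∃ k, faceDim F = faceDim E' + k + 1 :=
      ⟨faceDim F - faceDim E' - 1, by have := hlt E' hE' F hF hEF; omega⟩
    have h2 : ∑ E ∈ hfin.toFinset.filter (fun E => E' ⊂ E ∧ E ⊂ F),
        (-1 : ℚ[X]) ^ (faceDim F - 1 - faceDim E)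
        = -(-1) ^ k * ∑ E ∈ hfin.toFinset.filter (fun E => E' ⊂ E ∧ E ⊂ F),
          (-1 : ℚ[X]) ^ (faceDim E - faceDim E' - 1) := by
      rw [Finset.mul_sum]
      refine Finset.sum_congr rfl fun E hE => ?_
      rw [Finset.mem_filter] at hE
      have h3 := hlt E' hE' E hE.1 hE.2.1
      have h4 := hlt E hE.1 F hF hE.2.2
      obtain ⟨j, hj⟩ : ∃ j, faceDim E = faceDim E' + j + 1 := ⟨faceDim E - faceDim E' - 1, by omega⟩
      obtain ⟨i, rfl⟩ : ∃ i, k = j + i + 1 := ⟨k - j - 1, by omega⟩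
      rw [show faceDim F - 1 - faceDim E = i by omega,
        show faceDim E - faceDim E' - 1 = j by omega, pow_succ, pow_add]
      linear_combination (-(-1 : ℚ[X]) ^ i) * neg_one_pow_mul_neg_one_pow j
    rw [show faceDim F - faceDim E' - 1 = k by omega] at h
    rw [hs2, Finset.sum_insert (by simp), h2, show faceDim F - 1 - faceDim E' = k by omega]
    linear_combination (-(-1 : ℚ[X]) ^ k) * h + neg_one_pow_mul_neg_one_pow k
  obtain ⟨hdeg, hmain⟩ := reflect_g_of_eulerian hfin.toFinset faceDim hlt h₀ h₁ f g
    (fun F hF => hf F ((hI F).1 hF)) (fun F hF => hg F ((hI F).1 hF)) P ((hI P).2 (Or.inl rfl))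
  rw [hdim] at hdeg hmain
  have hall : hfin.toFinset.filter (fun E => E ⊆ P) = hfin.toFinset :=
    Finset.filter_true_of_mem fun E hE => ((hI E).1 hE).subset
  rw [hall] at hmain
  rw [← hmain]
  conv_rhs => rw [(g P).as_sum_range' (n + 2) (by omega)]
  rw [reflect_finset_sum]
  refine Finset.sum_congr rfl fun l hl => ?_
  rw [← C_mul_X_pow_eq_monomial, reflect_C_mul_X_pow,
    revAt_le (by have := Finset.mem_range.1 hl; omega)]
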